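/- arXiv:2207.04764 — 3 statements merged into one kernel-verified Lean document; each statement's English description precedes it below -/
import Mathlib

section
/- (Abstract stationary-point error identity.) Let E be a real normed vector space and L : E → ℝ be three times continuously Fréchet differentiable. Let x, x̃ ∈ E, set e := x − x̃, and assume the directional stationarity condition DL(x)(e) = 0, where DL(x) is the Fréchet derivative of L at x. Then L(x) − L(x̃) = (1/2)·DL(x̃)(e) + (1/2)·∫₀¹ D³L(x̃ + s·e)(e,e,e)·s·(s−1) ds, where D³L(y)(e,e,e) denotes the third Fréchet derivative of L at y evaluated at (e,e,e). -/
/-!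
The restriction of `L` to the line `s ↦ xt + s e` has the derivative `s ↦ DL(xt + s e)(e)`,
so `L x - L xt` is the integral of the latter over `[0, 1]`. The trapezoidal rule replaces this
integral by the mean of the endpoint values `DL(xt)(e)` and `DL(x)(e)`, the second of which vanishes
by stationarity. Its error term comes from integrating by parts twice against the kernel
`(s - a)(s - b)`: since the kernel is zero at both nodes, only the values of the integrand at the
nodes survive as boundary terms.
-/

open intervalIntegral MeasureTheory Set

section TrapezoidalRule

variable {F : Type*} [NormedAddCommGroup F] [NormedSpace ℝ F] [CompleteSpace F]
  {a b : ℝ} {u u' u'' : ℝ → F}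

theorem integral_two_mul_sub_add_smul_deriv
    (hu : ∀ s ∈ uIcc a b, HasDerivAt u (u' s) s)
    (hu' : IntervalIntegrable u' volume a b) :
    ∫ s in a..b, (2 * s - (a + b)) • u' s =
      (b - a) • (u a + u b) - (2 : ℝ) • ∫ s in a..b, u s := by
  have hkernel (s : ℝ) : HasDerivAt (fun s ↦ 2 * s - (a + b)) 2 s := by
    simpa using ((hasDerivAt_id s).const_mul 2).sub_const (a + b)
  rw [integral_smul_deriv_eq_deriv_smul (fun s _ ↦ hkernel s) hu
    intervalIntegrable_const hu', intervalIntegral.integral_smul]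
  module

theorem integral_eq_trapezoid_add_integral_deriv_deriv
    (hu : ∀ s ∈ uIcc a b, HasDerivAt u (u' s) s)
    (hu' : ∀ s ∈ uIcc a b, HasDerivAt u' (u'' s) s)
    (hu'' : IntervalIntegrable u'' volume a b) :
    ∫ s in a..b, u s = ((b - a) / 2) • (u a + u b) +
      (1 / 2 : ℝ) • ∫ s in a..b, ((s - a) * (s - b)) • u'' s := by
  have hkernel (s : ℝ) : HasDerivAt (fun s ↦ (s - a) * (s - b)) (2 * s - (a + b)) s :=
    (((hasDerivAt_id' s).sub_const a).mul ((hasDerivAt_id' s).sub_const b)).congr_deriv (by ring)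
  have hu'_int : IntervalIntegrable u' volume a b :=
    ContinuousOn.intervalIntegrable fun s hs ↦ (hu' s hs).continuousAt.continuousWithinAt
  have hkernel_int : IntervalIntegrable (fun s ↦ 2 * s - (a + b)) volume a b :=
    Continuous.intervalIntegrable (by fun_prop) a b
  rw [integral_smul_deriv_eq_deriv_smul (fun s _ ↦ hkernel s) hu' hkernel_int hu'',
    integral_two_mul_sub_add_smul_deriv hu hu'_int]
  module

end TrapezoidalRule

section Line

variable {𝕜 E F : Type*} [NontriviallyNormedField 𝕜]
  [NormedAddCommGroup E] [NormedSpace 𝕜 E] [NormedAddCommGroup F] [NormedSpace 𝕜 F]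
  {f : E → F} {x e : E} {s : 𝕜} {k : ℕ}

theorem hasDerivAt_iteratedFDeriv_add_smul
    (hf : DifferentiableAt 𝕜 (iteratedFDeriv 𝕜 k f) (x + s • e)) :
    HasDerivAt (fun t : 𝕜 ↦ iteratedFDeriv 𝕜 k f (x + t • e) fun _ ↦ e)
      (iteratedFDeriv 𝕜 (k + 1) f (x + s • e) fun _ ↦ e) s := by
  have hline : HasDerivAt (fun t : 𝕜 ↦ x + t • e) e s := by
    simpa using ((hasDerivAt_id s).smul_const e).const_add x
  have hdiag := hf.continuousMultilinear_apply_const fun _ ↦ e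
  exact (hdiag.hasFDerivAt.comp_hasDerivAt s hline).congr_deriv
    (hf.iteratedFDeriv_succ_apply_left' (m := fun _ ↦ e)).symm

theorem continuousAt_iteratedFDeriv_add_smul
    (hf : ContinuousAt (iteratedFDeriv 𝕜 k f) (x + s • e)) :
    ContinuousAt (fun t : 𝕜 ↦ iteratedFDeriv 𝕜 k f (x + t • e) fun _ ↦ e) s :=
  (hf.comp (f := fun t : 𝕜 ↦ x + t • e) (by fun_prop)).eval_const _

end Line

theorem abstract_stationary_point_error_identity_general
    {E F : Type*} [NormedAddCommGroup E] [NormedSpace ℝ E]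
    [NormedAddCommGroup F] [NormedSpace ℝ F] [CompleteSpace F]
    {L : E → F} {xt e : E} (hL : ∀ s ∈ Icc (0 : ℝ) 1, ContDiffAt ℝ 3 L (xt + s • e)) :
    L (xt + e) - L xt = (1 / 2 : ℝ) • (fderiv ℝ L xt e + fderiv ℝ L (xt + e) e)
      + (1 / 2 : ℝ) • ∫ s in (0 : ℝ)..1,
          (s * (s - 1)) • iteratedFDeriv ℝ 3 L (xt + s • e) (fun _ ↦ e) := by
  rw [← uIcc_of_le zero_le_one] at hL
  let D (k : ℕ) (s : ℝ) : F := iteratedFDeriv ℝ k L (xt + s • e) fun _ ↦ e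
  have hD {k : ℕ} (hk : k < 3) : ∀ s ∈ uIcc (0 : ℝ) 1, HasDerivAt (D k) (D (k + 1) s) s :=
    fun s hs ↦ hasDerivAt_iteratedFDeriv_add_smul <|
      (hL s hs).differentiableAt_iteratedFDeriv (mod_cast hk)
  have hD_int {k : ℕ} (hk : k ≤ 3) : IntervalIntegrable (D k) volume 0 1 :=
    ContinuousOn.intervalIntegrable fun s hs ↦ ContinuousAt.continuousWithinAt <|
      continuousAt_iteratedFDeriv_add_smul <|
        (hL s hs).continuousAt_iteratedFDeriv (mod_cast hk)
  calc L (xt + e) - L xt = D 0 1 - D 0 0 := by simp [D]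
    _ = ∫ s in (0 : ℝ)..1, D 1 s :=
      (integral_eq_sub_of_hasDerivAt (hD (by norm_num)) (hD_int (by norm_num))).symm
    _ = ((1 - 0) / 2 : ℝ) • (D 1 0 + D 1 1) +
          (1 / 2 : ℝ) • ∫ s in (0 : ℝ)..1, ((s - 0) * (s - 1)) • D 3 s :=
      integral_eq_trapezoid_add_integral_deriv_deriv
        (hD (by norm_num)) (hD (by norm_num)) (hD_int le_rfl)
    _ = _ := by simp [D]

/-- Abstract stationary-point error identity: if `L : E → ℝ` is `C³` and the
directional stationarity condition `DL(x)(e) = 0` holds for `e := x - xt`, then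
`L x - L xt = (1/2)·DL(xt)(e) + (1/2)·∫₀¹ D³L(xt + s e)(e,e,e)·s·(s−1) ds`. -/
theorem abstract_stationary_point_error_identity
    {E : Type*} [NormedAddCommGroup E] [NormedSpace ℝ E]
    (L : E → ℝ) (hL : ContDiff ℝ 3 L)
    (x xt : E) (e : E) (he : e = x - xt)
    (hstat : fderiv ℝ L x e = 0) :
    L x - L xt = (1 / 2) * fderiv ℝ L xt e
      + (1 / 2) * ∫ s in (0 : ℝ)..1,
          (iteratedFDeriv ℝ 3 L (xt + s • e) (fun _ => e)) * s * (s - 1) := by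
  obtain rfl : x = xt + e := by simp [he]
  simpa [hstat, mul_comm, mul_left_comm, mul_assoc] using
    abstract_stationary_point_error_identity_general fun s _ ↦ hL.contDiffAt (x := xt + s • e)
end

section
/- (Theorem: split error identity.) Assume the nonlinear DWR setting below with nested subspaces X_h ⊆ X_k ⊆ X, continuous solutions (u,z), semidiscrete solutions (u_k,z_k) in X_k, and fully discrete solutions (u_kh,z_kh) in X_h. Then J(u) − J(u_kh) = (J(u) − J(u_k)) + (J(u_k) − J(u_kh)), with the two representations J(u) − J(u_k) = (1/2)·ρ(u_k)(z − z_k) + (1/2)·ρ*(u_k,z_k)(u − u_k) + R_k and J(u_k) − J(u_kh) = (1/2)·ρ(u_kh)(z_k − z_kh) + (1/2)·ρ*(u_kh,z_kh)(u_k − u_kh) + R_h, where R_k := (1/2)·∫₀¹ D³L((u_k,z_k) + s·e_k)(e_k,e_k,e_k)·s·(s−1) ds with e_k := (u,z) − (u_k,z_k), and R_h := (1/2)·∫₀¹ D³L((u_kh,z_kh) + s·e_h)(e_h,e_h,e_h)·s·(s−1) ds with e_h := (u_k,z_k) − (u_kh,z_kh). -/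
/-!
Where the primal residual of `v` vanishes at `w`, the Lagrangian takes the value `L(v, w) = J v`,
so an error in `J` is a difference of values of `L`, that is, the integral of `L'(x + s e)(e)` over
`0 ≤ s ≤ 1`. The trapezoidal rule evaluates this integral through the endpoint derivatives, at the
cost of the cubic remainder. By Galerkin orthogonality `L'` vanishes in direction `e` at the finer
endpoint; at the coarser one it is the sum of the primal and the adjoint residual.
-/

open MeasureTheory Set

theorem hasDerivAt_iteratedFDeriv_add_smul_s3 {𝕜 E G : Type*} [NontriviallyNormedField 𝕜]
    [NormedAddCommGroup E] [NormedSpace 𝕜 E] [NormedAddCommGroup G] [NormedSpace 𝕜 G]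
    {f : E → G} {x y : E} {t : 𝕜} {n : ℕ} (hf : ContDiffAt 𝕜 (n + 1) f (x + t • y)) :
    HasDerivAt (fun s : 𝕜 ↦ iteratedFDeriv 𝕜 n f (x + s • y) fun _ ↦ y)
      (iteratedFDeriv 𝕜 (n + 1) f (x + t • y) fun _ ↦ y) t := by
  have hdiff : DifferentiableAt 𝕜 (iteratedFDeriv 𝕜 n f) (x + t • y) :=
    hf.differentiableAt_iteratedFDeriv (by exact_mod_cast n.lt_succ_self)
  rw [← hf.deriv_fderiv_add_smul]
  exact DifferentiableAt.hasDerivAt (by fun_prop)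

section Trapezoid

variable {E G : Type*} [NormedAddCommGroup E] [NormedSpace ℝ E]
  [NormedAddCommGroup G] [NormedSpace ℝ G] [CompleteSpace G]

theorem integral_eq_trapezoid_add_integral_smul_deriv_deriv {a b : ℝ}
    {f f' f'' : ℝ → G} (hf : ∀ s ∈ uIcc a b, HasDerivAt f (f' s) s)
    (hf' : ∀ s ∈ uIcc a b, HasDerivAt f' (f'' s) s)
    (hf'' : IntervalIntegrable f'' volume a b) :
    ∫ s in a..b, f s = ((b - a) / 2) • (f a + f b)
      + (1 / 2 : ℝ) • ∫ s in a..b, ((s - a) * (s - b)) • f'' s := by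
  have hf'_int : IntervalIntegrable f' volume a b :=
    ContinuousOn.intervalIntegrable fun s hs ↦ (hf' s hs).continuousAt.continuousWithinAt
  have hquad (s : ℝ) : HasDerivAt (fun s ↦ (s - a) * (s - b)) (2 * s - a - b) s :=
    (((hasDerivAt_id' s).sub_const a).mul ((hasDerivAt_id' s).sub_const b)).congr_deriv (by ring)
  have hlin (s : ℝ) : HasDerivAt (fun s ↦ 2 * s - a - b) 2 s := by
    simpa using (((hasDerivAt_id' s).const_mul 2).sub_const a).sub_const b
  have by_parts : ∫ s in a..b, ((s - a) * (s - b)) • f'' s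
      = -∫ s in a..b, (2 * s - a - b) • f' s := by
    simpa using intervalIntegral.integral_smul_deriv_eq_deriv_smul (fun s _ ↦ hquad s) hf'
      (Continuous.intervalIntegrable (by fun_prop) a b) hf''
  have by_parts_again : ∫ s in a..b, (2 * s - a - b) • f' s
      = (b - a) • (f a + f b) - (2 : ℝ) • ∫ s in a..b, f s := by
    rw [intervalIntegral.integral_smul_deriv_eq_deriv_smul (fun s _ ↦ hlin s) hf
      intervalIntegrable_const hf'_int, intervalIntegral.integral_smul]
    module
  rw [by_parts, by_parts_again]
  module

theorem map_add_sub_map_eq_trapezoid_add_integral {f : E → G} {x y : E}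
    (hf : ∀ t ∈ Icc (0 : ℝ) 1, ContDiffAt ℝ 3 f (x + t • y)) :
    f (x + y) - f x = (1 / 2 : ℝ) • (fderiv ℝ f x y + fderiv ℝ f (x + y) y)
      + (1 / 2 : ℝ) • ∫ s in (0 : ℝ)..1,
          (s * (s - 1)) • iteratedFDeriv ℝ 3 f (x + s • y) fun _ ↦ y := by
  rw [← uIcc_of_le zero_le_one] at hf
  have hline {n : ℕ} (hn : n + 1 ≤ 3) : ∀ t ∈ uIcc (0 : ℝ) 1,
      HasDerivAt (fun s : ℝ ↦ iteratedFDeriv ℝ n f (x + s • y) fun _ ↦ y)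
        (iteratedFDeriv ℝ (n + 1) f (x + t • y) fun _ ↦ y) t := fun t ht ↦
    hasDerivAt_iteratedFDeriv_add_smul_s3 ((hf t ht).of_le (by exact_mod_cast hn))
  have hcont : ContinuousOn (fun s : ℝ ↦ iteratedFDeriv ℝ 3 f (x + s • y) fun _ ↦ y)
      (uIcc 0 1) := by
    intro t ht
    have h₃ : ContinuousAt (iteratedFDeriv ℝ 3 f) (x + t • y) :=
      ((hf t ht).iteratedFDeriv_right (i := 3) (m := 0) (by norm_num)).continuousAt
    exact (h₃.comp (x := t) (by fun_prop)).continuousWithinAt.eval_const _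
  have ftc : f (x + y) - f x
      = ∫ s in (0 : ℝ)..1, iteratedFDeriv ℝ 1 f (x + s • y) fun _ ↦ y := by
    rw [map_add_eq_sum_add_integral_iteratedFDeriv (n := 0)
      fun t ht ↦ (hf t (Icc_subset_uIcc ht)).of_le (by norm_num)]
    simp
  rw [ftc, integral_eq_trapezoid_add_integral_smul_deriv_deriv (hline (by norm_num))
    (hline (by norm_num)) hcont.intervalIntegrable]
  simp

end Trapezoid

section DualWeightedResidual

variable {E X : Type*} [NormedAddCommGroup E] [NormedSpace ℝ E]
  [NormedAddCommGroup X] [NormedSpace ℝ X]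

/-- The Lagrangian `L(v, w) = J(v) - A(v, w) + F(w)` of the dual-weighted residual method, whose
stationary points are the pairs of primal and adjoint solutions. -/
def dwrLagrangian (J : X → ℝ) (A : X → X →L[ℝ] ℝ) (F : X →L[ℝ] ℝ) (p : X × X) : ℝ :=
  J p.1 - A p.1 p.2 + F p.2

/-- The primal residual `ρ(v) = F - A(v, ·)`, as a functional on test functions. -/
def primalResidual (A : X → X →L[ℝ] ℝ) (F : X →L[ℝ] ℝ) (v : X) : X →L[ℝ] ℝ :=
  F - A v

/-- The adjoint residual `ρ*(v, w) = J'(v) - A'_u(v)(·, w)`, as a functional on directions. -/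
noncomputable def adjointResidual (J : X → ℝ) (A : X → X →L[ℝ] ℝ) (v w : X) : X →L[ℝ] ℝ :=
  fderiv ℝ J v - fderiv ℝ (fun v ↦ A v w) v

/-- The remainder `R` of the error representation, where `x` is the pair of primal and adjoint
approximations and `e` its error: the error of the trapezoidal rule for `∫₀¹ L'(x + s e)(e) ds`. -/
noncomputable def dwrRemainder (L : E → ℝ) (x e : E) : ℝ :=
  (1 / 2) * ∫ s in (0 : ℝ)..1, (iteratedFDeriv ℝ 3 L (x + s • e) fun _ ↦ e) * s * (s - 1)

/-- `(v, w)` is a pair of primal and adjoint Galerkin solutions in the trial and test space `V`;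
the continuous solutions are the case `V = ⊤`. -/
structure IsGalerkinPair (J : X → ℝ) (A : X → X →L[ℝ] ℝ) (F : X →L[ℝ] ℝ) (V : Submodule ℝ X)
    (v w : X) : Prop where
  primal_mem : v ∈ V
  adjoint_mem : w ∈ V
  primal_eq : ∀ φ ∈ V, A v φ = F φ
  adjoint_eq : ∀ ψ ∈ V, fderiv ℝ J v ψ = fderiv ℝ (fun v ↦ A v w) v ψ

variable {J : X → ℝ} {A : X → X →L[ℝ] ℝ} {F : X →L[ℝ] ℝ} {V : Submodule ℝ X} {v w v₀ w₀ : X}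

theorem IsGalerkinPair.primalResidual_eq_zero (h : IsGalerkinPair J A F V v w) {φ : X}
    (hφ : φ ∈ V) : primalResidual A F v φ = 0 :=
  sub_eq_zero.2 (h.primal_eq φ hφ).symm

theorem IsGalerkinPair.adjointResidual_eq_zero (h : IsGalerkinPair J A F V v w) {ψ : X}
    (hψ : ψ ∈ V) : adjointResidual J A v w ψ = 0 :=
  sub_eq_zero.2 (h.adjoint_eq ψ hψ)

theorem dwrLagrangian_eq_add_primalResidual :
    dwrLagrangian J A F (v, w) = J v + primalResidual A F v w := by
  simp only [dwrLagrangian, primalResidual, sub_apply]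
  ring

theorem differentiableAt_of_dwrLagrangian
    (hL : DifferentiableAt ℝ (dwrLagrangian J A F) (v, 0)) : DifferentiableAt ℝ J v := by
  have hJ : J = fun v ↦ dwrLagrangian J A F (v, 0) := by simp [dwrLagrangian]
  rw [hJ]
  exact hL.comp (f := (·, 0)) v (by fun_prop)

theorem differentiableAt_form_of_dwrLagrangian (hJ : DifferentiableAt ℝ J v)
    (hL : DifferentiableAt ℝ (dwrLagrangian J A F) (v, w)) :
    DifferentiableAt ℝ (fun v ↦ A v w) v := by
  have hA : (fun v ↦ A v w) = fun v ↦ J v + F w - dwrLagrangian J A F (v, w) := by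
    funext v
    simp only [dwrLagrangian]
    ring
  rw [hA]
  exact (hJ.add_const _).sub (hL.comp (f := (·, w)) v (by fun_prop))

theorem fderiv_dwrLagrangian_apply (hJ : DifferentiableAt ℝ J v)
    (hL : DifferentiableAt ℝ (dwrLagrangian J A F) (v, w)) (a b : X) :
    fderiv ℝ (dwrLagrangian J A F) (v, w) (a, b)
      = primalResidual A F v b + adjointResidual J A v w a := by
  have hA := differentiableAt_form_of_dwrLagrangian hJ hL
  have fderiv_left : fderiv ℝ (dwrLagrangian J A F) (v, w) (a, 0) = adjointResidual J A v w a := by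
    have hv : HasFDerivAt (fun v ↦ dwrLagrangian J A F (v, w)) (adjointResidual J A v w) v :=
      (hJ.hasFDerivAt.sub hA.hasFDerivAt).add_const (F w)
    exact DFunLike.congr_fun
      ((hL.hasFDerivAt.comp (f := (·, w)) v (hasFDerivAt_prodMk_left v w)).unique hv) a
  have fderiv_right : fderiv ℝ (dwrLagrangian J A F) (v, w) (0, b) = primalResidual A F v b := by
    have hw : HasFDerivAt (fun w ↦ dwrLagrangian J A F (v, w)) (primalResidual A F v) w := by
      simp only [dwrLagrangian_eq_add_primalResidual]
      exact (primalResidual A F v).hasFDerivAt.const_add (J v)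
    exact DFunLike.congr_fun
      ((hL.hasFDerivAt.comp (f := (v, ·)) w (hasFDerivAt_prodMk_right v w)).unique hw) b
  rw [← fderiv_left, ← fderiv_right, ← map_add, Prod.mk_add_mk, zero_add, add_zero]

theorem sub_eq_trapezoid_add_dwrRemainder {L : E → ℝ} (hL : ContDiff ℝ 3 L) (x y : E) :
    L y - L x = (1 / 2) * (fderiv ℝ L x (y - x) + fderiv ℝ L y (y - x))
      + dwrRemainder L x (y - x) := by
  have h := map_add_sub_map_eq_trapezoid_add_integral (x := x) (y := y - x)
    fun _ _ ↦ hL.contDiffAt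
  rw [add_sub_cancel] at h
  simp only [h, dwrRemainder, smul_eq_mul, mul_assoc, mul_comm, mul_left_comm]

theorem IsGalerkinPair.sub_eq_residuals_add_dwrRemainder
    (hL : ContDiff ℝ 3 (dwrLagrangian J A F)) (h : IsGalerkinPair J A F V v w)
    (hv₀ : v₀ ∈ V) (hw₀ : w₀ ∈ V) :
    J v - J v₀ = (1 / 2) * primalResidual A F v₀ (w - w₀)
      + (1 / 2) * adjointResidual J A v₀ w₀ (v - v₀)
      + dwrRemainder (dwrLagrangian J A F) (v₀, w₀) ((v, w) - (v₀, w₀))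
      + primalResidual A F v₀ w₀ := by
  have hd : Differentiable ℝ (dwrLagrangian J A F) := hL.differentiable (by norm_num)
  have fderiv_eq (v' w' : X) :=
    fderiv_dwrLagrangian_apply (differentiableAt_of_dwrLagrangian (hd (v', 0))) (hd (v', w'))
      (v - v₀) (w - w₀)
  have stationary : fderiv ℝ (dwrLagrangian J A F) (v, w) ((v, w) - (v₀, w₀)) = 0 := by
    rw [Prod.mk_sub_mk, fderiv_eq, h.primalResidual_eq_zero (V.sub_mem h.adjoint_mem hw₀),
      h.adjointResidual_eq_zero (V.sub_mem h.primal_mem hv₀), add_zero]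
  have trapezoid := sub_eq_trapezoid_add_dwrRemainder hL (v₀, w₀) (v, w)
  rw [stationary, dwrLagrangian_eq_add_primalResidual, dwrLagrangian_eq_add_primalResidual,
    h.primalResidual_eq_zero h.adjoint_mem] at trapezoid
  rw [Prod.mk_sub_mk] at trapezoid ⊢
  rw [fderiv_eq] at trapezoid
  linarith

theorem split_error_identity_general {Xk : Submodule ℝ X}
    (hL : ContDiff ℝ 3 (dwrLagrangian J A F)) {u z uk zk ukh zkh : X}
    (hu : IsGalerkinPair J A F ⊤ u z) (huk : IsGalerkinPair J A F Xk uk zk)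
    (hukh : ukh ∈ Xk) (hzkh : zkh ∈ Xk) (hukh_sol : A ukh zkh = F zkh) :
    J u - J ukh = (J u - J uk) + (J uk - J ukh)
    ∧ J u - J uk = (1 / 2) * primalResidual A F uk (z - zk)
        + (1 / 2) * adjointResidual J A uk zk (u - uk)
        + dwrRemainder (dwrLagrangian J A F) (uk, zk) ((u, z) - (uk, zk))
    ∧ J uk - J ukh = (1 / 2) * primalResidual A F ukh (zk - zkh)
        + (1 / 2) * adjointResidual J A ukh zkh (uk - ukh)
        + dwrRemainder (dwrLagrangian J A F) (ukh, zkh) ((uk, zk) - (ukh, zkh)) := by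
  have huk_zero : primalResidual A F uk zk = 0 := huk.primalResidual_eq_zero huk.adjoint_mem
  have hukh_zero : primalResidual A F ukh zkh = 0 := sub_eq_zero.2 hukh_sol.symm
  refine ⟨(sub_add_sub_cancel _ _ _).symm, ?_, ?_⟩
  · simpa only [huk_zero, add_zero] using
      hu.sub_eq_residuals_add_dwrRemainder hL (v₀ := uk) (w₀ := zk) trivial trivial
  · simpa only [hukh_zero, add_zero] using huk.sub_eq_residuals_add_dwrRemainder hL hukh hzkh

end DualWeightedResidual

/-- Split error identity of the dual-weighted residual method (nonlinear setting):
the total error splits as `J(u) − J(u_kh) = (J(u) − J(u_k)) + (J(u_k) − J(u_kh))`,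
where each part admits a DWR representation with half primal residual, half adjoint
residual and a cubic remainder term built from the third derivative of the
Lagrangian `L(v,w) = J(v) − A(v,w) + F(w)`. -/
theorem split_error_identity
    {X : Type*} [NormedAddCommGroup X] [NormedSpace ℝ X]
    (Xh Xk : Submodule ℝ X) (hXhk : Xh ≤ Xk)
    (F : X →L[ℝ] ℝ) (J : X → ℝ) (A : X → X →L[ℝ] ℝ)
    (L : X × X → ℝ) (hLdef : ∀ v w : X, L (v, w) = J v - A v w + F w)
    (hL : ContDiff ℝ 3 L)
    (u z uk zk ukh zkh : X)
    (hu : ∀ φ : X, A u φ = F φ)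
    (hz : ∀ ψ : X, fderiv ℝ J u ψ = fderiv ℝ (fun v => A v z) u ψ)
    (huk : uk ∈ Xk) (hzk : zk ∈ Xk)
    (huk_sol : ∀ φk ∈ Xk, A uk φk = F φk)
    (hzk_sol : ∀ ψk ∈ Xk, fderiv ℝ J uk ψk = fderiv ℝ (fun v => A v zk) uk ψk)
    (hukh : ukh ∈ Xh) (hzkh : zkh ∈ Xh)
    (hukh_sol : ∀ φh ∈ Xh, A ukh φh = F φh)
    (hzkh_sol : ∀ ψh ∈ Xh, fderiv ℝ J ukh ψh = fderiv ℝ (fun v => A v zkh) ukh ψh)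
    (ek eh : X × X) (hek : ek = (u, z) - (uk, zk)) (heh : eh = (uk, zk) - (ukh, zkh)) :
    J u - J ukh = (J u - J uk) + (J uk - J ukh)
    ∧ J u - J uk
        = (1 / 2) * (F (z - zk) - A uk (z - zk))
          + (1 / 2) * (fderiv ℝ J uk (u - uk)
              - fderiv ℝ (fun v => A v zk) uk (u - uk))
          + (1 / 2) * ∫ s in (0 : ℝ)..1,
              (iteratedFDeriv ℝ 3 L ((uk, zk) + s • ek) (fun _ => ek)) * s * (s - 1)
    ∧ J uk - J ukh
        = (1 / 2) * (F (zk - zkh) - A ukh (zk - zkh))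
          + (1 / 2) * (fderiv ℝ J ukh (uk - ukh)
              - fderiv ℝ (fun v => A v zkh) ukh (uk - ukh))
          + (1 / 2) * ∫ s in (0 : ℝ)..1,
              (iteratedFDeriv ℝ 3 L ((ukh, zkh) + s • eh) (fun _ => eh)) * s * (s - 1) := by
  obtain rfl : L = dwrLagrangian J A F := funext fun p ↦ hLdef p.1 p.2
  subst hek heh
  exact split_error_identity_general hL ⟨trivial, trivial, fun φ _ ↦ hu φ, fun ψ _ ↦ hz ψ⟩
    ⟨huk, hzk, huk_sol, hzk_sol⟩ (hXhk hukh) (hXhk hzkh) (hukh_sol zkh hzkh)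
end

section
/- (Temporal split error representation for linear problems.) Under the nested linear DWR setting below, the semidiscretization error in the goal functional satisfies the exact identity J(u) − J(u_k) = F(z − z_k) − A(u_kh, z − z_k). Note that the fully discrete solution u_kh appears in the residual on the right-hand side. -/
section Galerkin

variable {R V W N : Type*} [CommRing R] [AddCommGroup V] [Module R V] [AddCommGroup W] [Module R W]
  [AddCommGroup N] [Module R N]

/-- `u` is a Petrov–Galerkin solution, with trial space `U` and test space `T`, of the linear
variational problem `A u φ = F φ`. Taking `U = T = ⊤` gives the undiscretized problem. The adjoint
problem `A ψ z = J ψ` is the problem for `A.flip` and `J`, with the roles of `U` and `T`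
exchanged. -/
structure IsGalerkinSolution (A : V →ₗ[R] W →ₗ[R] N) (F : W →ₗ[R] N) (U : Submodule R V)
    (T : Submodule R W) (u : V) : Prop where
  mem : u ∈ U
  apply_eq : ∀ φ ∈ T, A u φ = F φ

variable {A : V →ₗ[R] W →ₗ[R] N} {F : W →ₗ[R] N} {J : V →ₗ[R] N}
  {U Uk : Submodule R V} {T Tk : Submodule R W} {u uk : V} {z zk : W}

theorem IsGalerkinSolution.orthogonality (hu : IsGalerkinSolution A F U T u)
    (huk : IsGalerkinSolution A F Uk Tk uk) (hT : Tk ≤ T) {φ : W} (hφ : φ ∈ Tk) :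
    A (u - uk) φ = 0 := by
  rw [map_sub, LinearMap.sub_apply, hu.apply_eq φ (hT hφ), huk.apply_eq φ hφ, sub_self]

theorem IsGalerkinSolution.apply_eq_apply_of_flip (hu : IsGalerkinSolution A F U T u)
    (hz : IsGalerkinSolution A.flip J T U z) : F z = J u :=
  (hu.apply_eq z hz.mem).symm.trans (hz.apply_eq u hu.mem)

theorem temporal_split_error_representation_linear_general
    (hU : Uk ≤ U)
    (hu : IsGalerkinSolution A F U T u) (hz : IsGalerkinSolution A.flip J T U z)
    (huk : IsGalerkinSolution A F Uk Tk uk) (hzk : IsGalerkinSolution A.flip J Tk Uk zk)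
    {w : V} (hw : w ∈ Uk) :
    J u - J uk = F (z - zk) - A w (z - zk) := by
  have adjoint_orthogonality : A w (z - zk) = 0 := hz.orthogonality hzk hU hw
  calc
    J u - J uk = F z - F zk := by
      rw [hu.apply_eq_apply_of_flip hz, huk.apply_eq_apply_of_flip hzk]
    _ = F (z - zk) - A w (z - zk) := by rw [adjoint_orthogonality, sub_zero, map_sub]

end Galerkin

/-- Temporal split error representation for linear problems:
`J(u) − J(u_k) = F(z − z_k) − A(u_kh, z − z_k)`. -/
theorem temporal_split_error_representation_linear
    {X : Type*} [AddCommGroup X] [Module ℝ X]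
    (A : X →ₗ[ℝ] X →ₗ[ℝ] ℝ) (F J : X →ₗ[ℝ] ℝ)
    (Xkh Xk : Submodule ℝ X) (hnested : Xkh ≤ Xk)
    (u z uk zk ukh zkh : X)
    (hu : ∀ φ : X, A u φ = F φ)
    (hz : ∀ ψ : X, A ψ z = J ψ)
    (huk : uk ∈ Xk) (hzk : zk ∈ Xk)
    (huk_sol : ∀ φk ∈ Xk, A uk φk = F φk)
    (hzk_sol : ∀ ψk ∈ Xk, A ψk zk = J ψk)
    (hukh : ukh ∈ Xkh) (hzkh : zkh ∈ Xkh)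
    (hukh_sol : ∀ φh ∈ Xkh, A ukh φh = F φh)
    (hzkh_sol : ∀ ψh ∈ Xkh, A ψh zkh = J ψh) :
    J u - J uk = F (z - zk) - A ukh (z - zk) :=
  temporal_split_error_representation_linear_general (U := ⊤) (T := ⊤) le_top
    ⟨trivial, fun φ _ => hu φ⟩ ⟨trivial, fun ψ _ => hz ψ⟩ ⟨huk, huk_sol⟩ ⟨hzk, hzk_sol⟩
    (hnested hukh)
end
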